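/- arXiv:2212.11567 — 3 statements merged into one kernel-verified Lean document; each statement's English description precedes it below -/
import Mathlib

section
/- For every K ∈ ℝ^{m×p}, E[‖D K (C x + v)‖₂²] ≥ σ_min(Dᵀ D) (σ_min(C V_xx Cᵀ) + σ_min(V_vv)) ‖K‖_F². -/
open MeasureTheory ProbabilityTheory Matrix

/-- Operator (spectral) norm of a real matrix. -/
noncomputable def opNorm {α β : Type*} [Fintype α] [Fintype β] [DecidableEq β]
    (A : Matrix α β ℝ) : ℝ :=
  ‖LinearMap.toContinuousLinearMap (Matrix.toEuclideanLin A)‖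

/-- Frobenius norm of a real matrix. -/
noncomputable def frobNorm {α β : Type*} [Fintype α] [Fintype β] (A : Matrix α β ℝ) : ℝ :=
  Real.sqrt (∑ i, ∑ j, (A i j) ^ 2)

/-- Smallest singular value of a real square matrix. -/
noncomputable def sigmaMin {α : Type*} [Fintype α] [DecidableEq α] (A : Matrix α α ℝ) : ℝ :=
  sInf {c | ∃ x : EuclideanSpace ℝ α, ‖x‖ = 1 ∧ c = ‖Matrix.toEuclideanLin A x‖}

lemma sigmaMin_nonneg' {k : ℕ} (A : Matrix (Fin k) (Fin k) ℝ) : 0 ≤ sigmaMin A := by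
  apply Real.sInf_nonneg
  rintro c ⟨x, _, rfl⟩
  exact norm_nonneg _

lemma sigmaMin_quad {k : ℕ} (A : Matrix (Fin k) (Fin k) ℝ) (hA : A.PosSemidef) (y : Fin k → ℝ) :
    sigmaMin A * (y ⬝ᵥ y) ≤ y ⬝ᵥ (A *ᵥ y) := by
  have hH := hA.1
  have hs : ∀ i, sigmaMin A ≤ hH.eigenvalues i := by
    intro i
    apply csInf_le
    · refine ⟨0, ?_⟩
      rintro c ⟨x, _, rfl⟩
      exact norm_nonneg _
    · refine ⟨hH.eigenvectorBasis i, hH.eigenvectorBasis.orthonormal.1 i, ?_⟩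
      have h1 : Matrix.toEuclideanLin A (hH.eigenvectorBasis i)
          = hH.eigenvalues i • hH.eigenvectorBasis i := by
        ext j
        have := congrFun (hH.mulVec_eigenvectorBasis i) j
        simpa [Matrix.toLpLin_apply] using this
      rw [h1, norm_smul, hH.eigenvectorBasis.orthonormal.1 i, mul_one, Real.norm_eq_abs,
        abs_of_nonneg (hA.eigenvalues_nonneg i)]
  have hdot : ∀ a b : Fin k → ℝ, a ⬝ᵥ b =
      ∑ i, (a ⬝ᵥ (hH.eigenvectorBasis i : Fin k → ℝ)) * ((hH.eigenvectorBasis i : Fin k → ℝ) ⬝ᵥ b) := by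
    intro a b
    have := hH.eigenvectorBasis.sum_inner_mul_inner (WithLp.toLp 2 a) (WithLp.toLp 2 b)
    simp only [EuclideanSpace.inner_eq_star_dotProduct, star_trivial] at this
    rw [dotProduct_comm a b, ← this]
    refine Finset.sum_congr rfl fun i _ => ?_
    rw [dotProduct_comm a, dotProduct_comm _ b]
  rw [hdot y y, hdot y (A *ᵥ y), Finset.mul_sum]
  refine Finset.sum_le_sum fun i _ => ?_
  have ht : Aᵀ = A := by
    rw [← conjTranspose_eq_transpose_of_trivial]
    exact hH
  have h2 : (hH.eigenvectorBasis i : Fin k → ℝ) ⬝ᵥ (A *ᵥ y)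
      = hH.eigenvalues i * ((hH.eigenvectorBasis i : Fin k → ℝ) ⬝ᵥ y) := by
    rw [dotProduct_mulVec, ← mulVec_transpose, ht, hH.mulVec_eigenvectorBasis i, smul_dotProduct,
      smul_eq_mul]
  rw [h2, dotProduct_comm y]
  nlinarith [mul_le_mul_of_nonneg_right (hs i)
    (mul_self_nonneg ((hH.eigenvectorBasis i : Fin k → ℝ) ⬝ᵥ y))]

lemma memLp_coord
    {Ω : Type*} [MeasurableSpace Ω] (μ : Measure Ω) [IsProbabilityMeasure μ] {n : ℕ}
    (x : Ω → Fin n → ℝ) (hx : Measurable x)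
    (hI : ∀ i j, Integrable (fun ω => x ω i * x ω j) μ)
    (i : Fin n) : MemLp (fun ω => x ω i) 2 μ := by
  have hm : Measurable fun ω => x ω i := (measurable_pi_apply i).comp hx
  rw [memLp_two_iff_integrable_sq hm.aestronglyMeasurable]
  simpa [sq] using hI i i

lemma memLp_dot
    {Ω : Type*} [MeasurableSpace Ω] (μ : Measure Ω) [IsProbabilityMeasure μ] {n : ℕ}
    (x : Ω → Fin n → ℝ) (hx : Measurable x)
    (hI : ∀ i j, Integrable (fun ω => x ω i * x ω j) μ)
    (a : Fin n → ℝ) : MemLp (fun ω => a ⬝ᵥ x ω) 2 μ := by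
  simp only [dotProduct]
  exact memLp_finsetSum _ fun i _ => (memLp_coord μ x hx hI i).const_mul (a i)

lemma mean_dot
    {Ω : Type*} [MeasurableSpace Ω] (μ : Measure Ω) [IsProbabilityMeasure μ] {n : ℕ}
    (x : Ω → Fin n → ℝ) (hx : Measurable x)
    (hI : ∀ i j, Integrable (fun ω => x ω i * x ω j) μ)
    (hmean : ∀ i, ∫ ω, x ω i ∂μ = 0) (a : Fin n → ℝ) : ∫ ω, a ⬝ᵥ x ω ∂μ = 0 := by
  simp only [dotProduct]
  rw [integral_finsetSum]
  · simp [integral_const_mul, hmean]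
  · intro i _
    exact ((memLp_coord μ x hx hI i).integrable (by norm_num)).const_mul _

lemma sq_dot
    {Ω : Type*} [MeasurableSpace Ω] (μ : Measure Ω) [IsProbabilityMeasure μ] {n : ℕ}
    (x : Ω → Fin n → ℝ) (hx : Measurable x)
    (hI : ∀ i j, Integrable (fun ω => x ω i * x ω j) μ)
    (V : Matrix (Fin n) (Fin n) ℝ) (hV : ∀ i j, ∫ ω, x ω i * x ω j ∂μ = V i j)
    (a : Fin n → ℝ) : ∫ ω, (a ⬝ᵥ x ω) ^ 2 ∂μ = a ⬝ᵥ (V *ᵥ a) := by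
  have h : ∀ ω, (a ⬝ᵥ x ω) ^ 2 = ∑ i, ∑ j, (a i * a j) * (x ω i * x ω j) := by
    intro ω
    rw [sq, dotProduct, Finset.sum_mul_sum]
    refine Finset.sum_congr rfl fun i _ => Finset.sum_congr rfl fun j _ => by ring
  simp only [h]
  rw [integral_finsetSum _ fun i _ => integrable_finsetSum _ fun j _ => (hI i j).const_mul _]
  simp only [dotProduct, mulVec, Finset.mul_sum]
  refine Finset.sum_congr rfl fun i _ => ?_
  rw [integral_finsetSum _ fun j _ => (hI i j).const_mul _]
  refine Finset.sum_congr rfl fun j _ => ?_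
  rw [integral_const_mul, hV]
  ring

lemma cov_psd
    {Ω : Type*} [MeasurableSpace Ω] (μ : Measure Ω) [IsProbabilityMeasure μ] {n : ℕ}
    (x : Ω → Fin n → ℝ) (hx : Measurable x)
    (hI : ∀ i j, Integrable (fun ω => x ω i * x ω j) μ)
    (V : Matrix (Fin n) (Fin n) ℝ) (hV : ∀ i j, ∫ ω, x ω i * x ω j ∂μ = V i j)
    : V.PosSemidef := by
  refine PosSemidef.of_dotProduct_mulVec_nonneg ?_ fun a => ?_
  · ext i j
    simp only [conjTranspose_apply, star_trivial, ← hV]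
    simp only [mul_comm]
  · rw [star_trivial, ← sq_dot μ x hx hI V hV a]
    exact integral_nonneg fun ω => sq_nonneg _

/-- For every `K ∈ ℝ^{m×p}`,
`E[‖D K (C x + v)‖₂²] ≥ σ_min(Dᵀ D) (σ_min(C V_xx Cᵀ) + σ_min(V_vv)) ‖K‖_F²`. -/
theorem stmt_1
    {Ω : Type*} [MeasurableSpace Ω] (μ : Measure Ω) [IsProbabilityMeasure μ]
    (n p l m : ℕ) (hn : 0 < n) (hp : 0 < p) (hl : 0 < l) (hm : 0 < m)
    (D : Matrix (Fin l) (Fin m) ℝ) (C : Matrix (Fin p) (Fin n) ℝ)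
    (x : Ω → Fin n → ℝ) (v : Ω → Fin p → ℝ)
    (hxmeas : Measurable x) (hvmeas : Measurable v)
    (hindep : IndepFun x v μ)
    (hxmean : ∀ i, ∫ ω, x ω i ∂μ = 0) (hvmean : ∀ i, ∫ ω, v ω i ∂μ = 0)
    (Vxx : Matrix (Fin n) (Fin n) ℝ) (Vvv : Matrix (Fin p) (Fin p) ℝ)
    (hVxxInt : ∀ i j, Integrable (fun ω => x ω i * x ω j) μ)
    (hVxx : ∀ i j, ∫ ω, x ω i * x ω j ∂μ = Vxx i j)
    (hVvvInt : ∀ i j, Integrable (fun ω => v ω i * v ω j) μ)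
    (hVvv : ∀ i j, ∫ ω, v ω i * v ω j ∂μ = Vvv i j)
    (K : Matrix (Fin m) (Fin p) ℝ) :
    sigmaMin (Dᵀ * D) * (sigmaMin (C * Vxx * Cᵀ) + sigmaMin Vvv) * (frobNorm K) ^ 2 ≤
      ∫ ω, ∑ j, (D.mulVec (K.mulVec (C.mulVec (x ω) + v ω)) j) ^ 2 ∂μ := by
  have hK : ∀ k : Fin p → ℝ, Integrable (fun ω => (k ⬝ᵥ (C *ᵥ x ω + v ω)) ^ 2) μ ∧
      (sigmaMin (C * Vxx * Cᵀ) + sigmaMin Vvv) * (k ⬝ᵥ k) ≤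
        ∫ ω, (k ⬝ᵥ (C *ᵥ x ω + v ω)) ^ 2 ∂μ := by
    intro k
    have e : ∀ ω, k ⬝ᵥ (C *ᵥ x ω + v ω) = (Cᵀ *ᵥ k) ⬝ᵥ x ω + k ⬝ᵥ v ω := by
      intro ω
      rw [dotProduct_add, dotProduct_mulVec, ← mulVec_transpose]
    have m1 := memLp_dot μ x hxmeas hVxxInt (Cᵀ *ᵥ k)
    have m2 := memLp_dot μ v hvmeas hVvvInt k
    have i12 : Integrable (fun ω => ((Cᵀ *ᵥ k) ⬝ᵥ x ω) * (k ⬝ᵥ v ω)) μ := m1.integrable_mul m2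
    have hcross : ∫ ω, ((Cᵀ *ᵥ k) ⬝ᵥ x ω) * (k ⬝ᵥ v ω) ∂μ = 0 := by
      have hi : IndepFun (fun ω => (Cᵀ *ᵥ k) ⬝ᵥ x ω) (fun ω => k ⬝ᵥ v ω) μ :=
        hindep.comp (φ := fun y => (Cᵀ *ᵥ k) ⬝ᵥ y) (ψ := fun y => k ⬝ᵥ y)
          (by unfold dotProduct; fun_prop) (by unfold dotProduct; fun_prop)
      rw [hi.integral_fun_mul_eq_mul_integral m1.1 m2.1,
        mean_dot μ v hvmeas hVvvInt hvmean, mul_zero]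
    have e2 : ∀ ω, (k ⬝ᵥ (C *ᵥ x ω + v ω)) ^ 2 = ((Cᵀ *ᵥ k) ⬝ᵥ x ω) ^ 2 + (k ⬝ᵥ v ω) ^ 2
        + 2 * (((Cᵀ *ᵥ k) ⬝ᵥ x ω) * (k ⬝ᵥ v ω)) := by
      intro ω
      rw [e]
      ring
    simp only [e2]
    have j1 := m1.integrable_sq
    have j2 := m2.integrable_sq
    refine ⟨(j1.add j2).add (i12.const_mul 2), ?_⟩
    have j12 : Integrable (fun ω => ((Cᵀ *ᵥ k) ⬝ᵥ x ω) ^ 2 + (k ⬝ᵥ v ω) ^ 2) μ := j1.add j2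
    rw [integral_add j12 (i12.const_mul 2), integral_add j1 j2, integral_const_mul, hcross,
      sq_dot μ x hxmeas hVxxInt Vxx hVxx, sq_dot μ v hvmeas hVvvInt Vvv hVvv]
    have p1 := cov_psd μ x hxmeas hVxxInt Vxx hVxx
    have p2 := cov_psd μ v hvmeas hVvvInt Vvv hVvv
    have p3 : (C * Vxx * Cᵀ).PosSemidef := by
      simpa using p1.mul_mul_conjTranspose_same C
    have q1 := sigmaMin_quad _ p3 k
    have q2 := sigmaMin_quad _ p2 k
    have q3 : k ⬝ᵥ ((C * Vxx * Cᵀ) *ᵥ k) = (Cᵀ *ᵥ k) ⬝ᵥ (Vxx *ᵥ (Cᵀ *ᵥ k)) := by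
      rw [← mulVec_mulVec, ← mulVec_mulVec, dotProduct_mulVec, ← mulVec_transpose]
    rw [q3] at q1
    linarith
  have hD : ∀ w : Fin m → ℝ, sigmaMin (Dᵀ * D) * ∑ i, w i ^ 2 ≤ ∑ j, (D *ᵥ w) j ^ 2 := by
    intro w
    have hp : (Dᵀ * D).PosSemidef := by simpa using posSemidef_conjTranspose_mul_self D
    have := sigmaMin_quad _ hp w
    rw [← mulVec_mulVec, dotProduct_mulVec, vecMul_transpose] at this
    simpa [dotProduct, sq] using this
  have hF : frobNorm K ^ 2 = ∑ i, (K.row i ⬝ᵥ K.row i) := by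
    unfold frobNorm
    have h0 : 0 ≤ ∑ i, ∑ j, (K i j) ^ 2 :=
      Finset.sum_nonneg fun i _ => Finset.sum_nonneg fun j _ => sq_nonneg _
    refine (Real.sq_sqrt h0).trans ?_
    simp [dotProduct, sq, Matrix.row]
  have hs := sigmaMin_nonneg' (Dᵀ * D)
  calc sigmaMin (Dᵀ * D) * (sigmaMin (C * Vxx * Cᵀ) + sigmaMin Vvv) * (frobNorm K) ^ 2
      = sigmaMin (Dᵀ * D) *
          ∑ i, (sigmaMin (C * Vxx * Cᵀ) + sigmaMin Vvv) * (K.row i ⬝ᵥ K.row i) := by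
        rw [hF, ← Finset.mul_sum, mul_assoc]
    _ ≤ sigmaMin (Dᵀ * D) * ∑ i, ∫ ω, (K.row i ⬝ᵥ (C *ᵥ x ω + v ω)) ^ 2 ∂μ :=
        mul_le_mul_of_nonneg_left (Finset.sum_le_sum fun i _ => (hK (K.row i)).2) hs
    _ = ∫ ω, sigmaMin (Dᵀ * D) * ∑ i, (K.row i ⬝ᵥ (C *ᵥ x ω + v ω)) ^ 2 ∂μ := by
        rw [integral_const_mul, integral_finsetSum _ fun i _ => (hK (K.row i)).1]
    _ ≤ _ := by
        refine integral_mono ?_ ?_ fun ω => hD (K *ᵥ (C *ᵥ x ω + v ω))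
        · exact (integrable_finsetSum _ fun i _ => (hK (K.row i)).1).const_mul _
        · refine integrable_finsetSum _ fun j _ => ?_
          have := (hK ((D * K).row j)).1
          refine this.congr (Filter.Eventually.of_forall fun ω => ?_)
          simp only [mulVec_mulVec]
          rfl
end

section
/- The expected loss J is α-strongly convex as a function of K ∈ ℝ^{m×p} with coefficient α = 2 σ_min(Dᵀ D) (σ_min(C V_xx Cᵀ) + σ_min(V_vv)); that is, the function K ↦ J(K) − (α/2) ‖K‖_F² is convex on ℝ^{m×p}. -/
open MeasureTheory ProbabilityTheory Matrix

theorem aux_sigma {d : ℕ} (A : Matrix (Fin d) (Fin d) ℝ) (hA : A.IsHermitian)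
    (hpos : ∀ u : Fin d → ℝ, 0 ≤ u ⬝ᵥ (A *ᵥ u)) (u : Fin d → ℝ) :
    sigmaMin A * (u ⬝ᵥ u) ≤ u ⬝ᵥ (A *ᵥ u) := by
  classical
  let b := hA.eigenvectorBasis
  let e : Fin d → Fin d → ℝ := fun i => (b i).ofLp
  have hin : ∀ s t : EuclideanSpace ℝ (Fin d), inner ℝ s t = s.ofLp ⬝ᵥ t.ofLp := by
    intro s t
    simp [EuclideanSpace.inner_eq_star_dotProduct, dotProduct_comm]
  have heig : ∀ i, A *ᵥ e i = hA.eigenvalues i • e i := fun i => hA.mulVec_eigenvectorBasis i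
  have hee : ∀ i, e i ⬝ᵥ e i = 1 := by
    intro i
    rw [← hin (b i) (b i), real_inner_self_eq_norm_sq, b.orthonormal.1 i]; norm_num
  have hnn : ∀ i, 0 ≤ hA.eigenvalues i := by
    intro i
    have := hpos (e i)
    rwa [heig, dotProduct_smul, hee, smul_eq_mul, mul_one] at this
  have hle : ∀ i, sigmaMin A ≤ hA.eigenvalues i := by
    intro i
    refine csInf_le ⟨0, ?_⟩ ⟨b i, b.orthonormal.1 i, ?_⟩
    · rintro c ⟨y, -, rfl⟩
      exact norm_nonneg _
    · have h1 : Matrix.toEuclideanLin A (b i) = hA.eigenvalues i • b i := by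
        apply (WithLp.ofLp_injective 2)
        exact heig i
      rw [h1, norm_smul, b.orthonormal.1 i, mul_one, Real.norm_of_nonneg (hnn i)]
  have hsum : ∀ s t : Fin d → ℝ, ∑ i, (s ⬝ᵥ e i) * (e i ⬝ᵥ t) = s ⬝ᵥ t := by
    intro s t
    have := b.sum_inner_mul_inner (WithLp.toLp 2 s) (WithLp.toLp 2 t)
    simpa only [hin] using this
  rw [← hsum u u, ← hsum u (A *ᵥ u), Finset.mul_sum]
  refine Finset.sum_le_sum fun i _ => ?_
  have h2 : e i ⬝ᵥ A *ᵥ u = hA.eigenvalues i * (u ⬝ᵥ e i) := by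
    have hT : Aᵀ = A := by rw [← conjTranspose_eq_transpose_of_trivial]; exact hA
    rw [dotProduct_mulVec, ← mulVec_transpose, hT, heig, smul_dotProduct, smul_eq_mul,
      dotProduct_comm u]
  rw [h2, dotProduct_comm (e i) u]
  nlinarith [mul_le_mul_of_nonneg_right (hle i) (mul_self_nonneg (u ⬝ᵥ e i))]

theorem aux_sigma_nonneg {d : ℕ} (A : Matrix (Fin d) (Fin d) ℝ) : 0 ≤ sigmaMin A := by
  apply Real.sInf_nonneg
  rintro c ⟨y, -, rfl⟩
  exact norm_nonneg _

theorem aux_memLp_dot {Ω : Type*} [MeasurableSpace Ω] {μ : Measure Ω} {d : ℕ}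
    (X : Ω → Fin d → ℝ) (hX : ∀ i, MemLp (fun ω => X ω i) 2 μ) (u : Fin d → ℝ) :
    MemLp (fun ω => u ⬝ᵥ X ω) 2 μ := by
  simp only [dotProduct]
  exact memLp_finsetSum _ fun i _ => (hX i).const_mul (u i)

theorem aux_quad {Ω : Type*} [MeasurableSpace Ω] {μ : Measure Ω} {d : ℕ}
    (X : Ω → Fin d → ℝ) (V : Matrix (Fin d) (Fin d) ℝ)
    (hI : ∀ i j, Integrable (fun ω => X ω i * X ω j) μ)
    (hV : ∀ i j, ∫ ω, X ω i * X ω j ∂μ = V i j) (u : Fin d → ℝ) :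
    ∫ ω, (u ⬝ᵥ X ω) ^ 2 ∂μ = u ⬝ᵥ (V *ᵥ u) := by
  have h : ∀ ω, (u ⬝ᵥ X ω) ^ 2 = ∑ i, ∑ j, (u i * u j) * (X ω i * X ω j) := by
    intro ω
    rw [sq, dotProduct, Finset.sum_mul_sum]
    exact Finset.sum_congr rfl fun i _ => Finset.sum_congr rfl fun j _ => by ring
  simp only [h]
  rw [integral_finsetSum _ fun i _ => integrable_finsetSum _ fun j _ => (hI i j).const_mul _]
  simp only [dotProduct, mulVec, Finset.mul_sum]
  refine Finset.sum_congr rfl fun i _ => ?_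
  rw [integral_finsetSum _ fun j _ => (hI i j).const_mul _]
  refine Finset.sum_congr rfl fun j _ => ?_
  rw [integral_const_mul, hV]; ring

/-- The expected loss `J` is `α`-strongly convex in `K` with
`α = 2 σ_min(Dᵀ D)(σ_min(C V_xx Cᵀ) + σ_min(V_vv))`; i.e. `K ↦ J(K) − (α/2)‖K‖_F²`
is convex on `ℝ^{m×p}`. -/
theorem stmt_2
    {Ω : Type*} [MeasurableSpace Ω] (μ : Measure Ω) [IsProbabilityMeasure μ]
    (n p l m : ℕ) (hn : 0 < n) (hp : 0 < p) (hl : 0 < l) (hm : 0 < m)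
    (H : Matrix (Fin l) (Fin n) ℝ) (D : Matrix (Fin l) (Fin m) ℝ)
    (C : Matrix (Fin p) (Fin n) ℝ)
    (x : Ω → Fin n → ℝ) (v : Ω → Fin p → ℝ)
    (hxmeas : Measurable x) (hvmeas : Measurable v)
    (hindep : IndepFun x v μ)
    (hxmean : ∀ i, ∫ ω, x ω i ∂μ = 0) (hvmean : ∀ i, ∫ ω, v ω i ∂μ = 0)
    (Vxx : Matrix (Fin n) (Fin n) ℝ) (Vvv : Matrix (Fin p) (Fin p) ℝ)
    (hVxxInt : ∀ i j, Integrable (fun ω => x ω i * x ω j) μ)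
    (hVxx : ∀ i j, ∫ ω, x ω i * x ω j ∂μ = Vxx i j)
    (hVvvInt : ∀ i j, Integrable (fun ω => v ω i * v ω j) μ)
    (hVvv : ∀ i j, ∫ ω, v ω i * v ω j ∂μ = Vvv i j)
    (α : ℝ)
    (hα : α = 2 * sigmaMin (Dᵀ * D) * (sigmaMin (C * Vxx * Cᵀ) + sigmaMin Vvv)) :
    ConvexOn ℝ Set.univ (fun K : Matrix (Fin m) (Fin p) ℝ =>
      (∫ ω, ∑ j, ((H.mulVec (x ω) + D.mulVec (K.mulVec (C.mulVec (x ω) + v ω))) j) ^ 2 ∂μ)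
        - (α / 2) * (frobNorm K) ^ 2) := by
  have hx2 : ∀ i, MemLp (fun ω => x ω i) 2 μ := fun i =>
    (memLp_two_iff_integrable_sq ((measurable_pi_apply i).comp hxmeas).aestronglyMeasurable).2
      (by simpa only [sq, Function.comp_apply] using hVxxInt i i)
  have hv2 : ∀ i, MemLp (fun ω => v ω i) 2 μ := fun i =>
    (memLp_two_iff_integrable_sq ((measurable_pi_apply i).comp hvmeas).aestronglyMeasurable).2
      (by simpa only [sq, Function.comp_apply] using hVvvInt i i)
  let y : Ω → Fin p → ℝ := fun ω => C *ᵥ x ω + v ω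
  have hy2 : ∀ i, MemLp (fun ω => y ω i) 2 μ := fun i =>
    (aux_memLp_dot x hx2 (C i)).add (hv2 i)
  have hKy2 : ∀ (K : Matrix (Fin m) (Fin p) ℝ) i, MemLp (fun ω => (K *ᵥ y ω) i) 2 μ :=
    fun K i => aux_memLp_dot y hy2 (K i)
  have hDKy2 : ∀ (K : Matrix (Fin m) (Fin p) ℝ) i, MemLp (fun ω => (D *ᵥ (K *ᵥ y ω)) i) 2 μ :=
    fun K i => aux_memLp_dot (fun ω => K *ᵥ y ω) (hKy2 K) (D i)
  have hz2 : ∀ (K : Matrix (Fin m) (Fin p) ℝ) i,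
      MemLp (fun ω => (H *ᵥ x ω + D *ᵥ (K *ᵥ y ω)) i) 2 μ :=
    fun K i => (aux_memLp_dot x hx2 (H i)).add (hDKy2 K i)
  have hzI : ∀ (K : Matrix (Fin m) (Fin p) ℝ),
      Integrable (fun ω => ∑ j, ((H *ᵥ x ω + D *ᵥ (K *ᵥ y ω)) j) ^ 2) μ :=
    fun K => integrable_finsetSum _ fun j _ => (hz2 K j).integrable_sq
  have hqx := aux_quad x Vxx hVxxInt hVxx
  have hqv := aux_quad v Vvv hVvvInt hVvv
  have hVxxpos : ∀ u : Fin n → ℝ, 0 ≤ u ⬝ᵥ (Vxx *ᵥ u) := fun u => by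
    rw [← hqx]; exact integral_nonneg fun ω => sq_nonneg _
  have hVvvpos : ∀ u : Fin p → ℝ, 0 ≤ u ⬝ᵥ (Vvv *ᵥ u) := fun u => by
    rw [← hqv]; exact integral_nonneg fun ω => sq_nonneg _
  have hVxxT : Vxxᵀ = Vxx := by
    ext i j; rw [transpose_apply, ← hVxx, ← hVxx]; simp only [mul_comm]
  have hVvvT : Vvvᵀ = Vvv := by
    ext i j; rw [transpose_apply, ← hVvv, ← hVvv]; simp only [mul_comm]
  have hC : ∀ r : Fin p → ℝ,
      r ⬝ᵥ ((C * Vxx * Cᵀ) *ᵥ r) = (r ᵥ* C) ⬝ᵥ (Vxx *ᵥ (r ᵥ* C)) := by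
    intro r
    rw [← mulVec_mulVec, ← mulVec_mulVec, mulVec_transpose, dotProduct_mulVec]
  -- row bound
  have hrow : ∀ r : Fin p → ℝ,
      (sigmaMin (C * Vxx * Cᵀ) + sigmaMin Vvv) * (r ⬝ᵥ r) ≤ ∫ ω, (r ⬝ᵥ y ω) ^ 2 ∂μ := by
    intro r
    have e1 : ∀ ω, (r ⬝ᵥ y ω) ^ 2 = ((r ᵥ* C) ⬝ᵥ x ω) ^ 2
        + (2 * (((r ᵥ* C) ⬝ᵥ x ω) * (r ⬝ᵥ v ω)) + (r ⬝ᵥ v ω) ^ 2) := by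
      intro ω
      simp only [y]
      rw [dotProduct_add, dotProduct_mulVec]; ring
    have mx := aux_memLp_dot x hx2 (r ᵥ* C)
    have mv := aux_memLp_dot v hv2 r
    have hxv : Integrable (fun ω => ((r ᵥ* C) ⬝ᵥ x ω) * (r ⬝ᵥ v ω)) μ := mx.integrable_mul mv
    have hcross : ∫ ω, ((r ᵥ* C) ⬝ᵥ x ω) * (r ⬝ᵥ v ω) ∂μ = 0 := by
      have hi : IndepFun (fun ω => (r ᵥ* C) ⬝ᵥ x ω) (fun ω => r ⬝ᵥ v ω) μ := by
        refine hindep.comp (φ := fun s => (r ᵥ* C) ⬝ᵥ s) (ψ := fun s => r ⬝ᵥ s) ?_ ?_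
        · simp only [dotProduct]; fun_prop
        · simp only [dotProduct]; fun_prop
      rw [hi.integral_fun_mul_eq_mul_integral mx.1 mv.1]
      have : ∫ ω, r ⬝ᵥ v ω ∂μ = 0 := by
        simp only [dotProduct]
        rw [integral_finsetSum _ fun i _ =>
          ((hv2 i).integrable (by norm_num)).const_mul _]
        simp only [integral_const_mul, hvmean, mul_zero, Finset.sum_const_zero]
      rw [this, mul_zero]
    have hs : Integrable (fun ω => 2 * (((r ᵥ* C) ⬝ᵥ x ω) * (r ⬝ᵥ v ω)) + (r ⬝ᵥ v ω) ^ 2) μ :=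
      (hxv.const_mul 2).add mv.integrable_sq
    simp only [e1]
    rw [integral_add mx.integrable_sq hs,
      integral_add (hxv.const_mul 2) mv.integrable_sq, integral_const_mul, hcross, hqx, hqv]
    have b1 := aux_sigma (C * Vxx * Cᵀ)
      (by simp [Matrix.IsHermitian, Matrix.mul_assoc, hVxxT])
      (fun u => by rw [hC]; exact hVxxpos _) r
    have b2 := aux_sigma Vvv (by simp [Matrix.IsHermitian, hVvvT]) hVvvpos r
    rw [hC] at b1
    linarith
  have hDD : ∀ w : Fin m → ℝ, w ⬝ᵥ ((Dᵀ * D) *ᵥ w) = ∑ j, ((D *ᵥ w) j) ^ 2 := by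
    intro w
    rw [← mulVec_mulVec, dotProduct_mulVec, vecMul_transpose]
    simp only [dotProduct, sq]
  have hD : ∀ w : Fin m → ℝ, sigmaMin (Dᵀ * D) * ∑ i, (w i) ^ 2 ≤ ∑ j, ((D *ᵥ w) j) ^ 2 := by
    intro w
    have := aux_sigma (Dᵀ * D) (by simp [Matrix.IsHermitian])
      (fun u => by rw [hDD]; positivity) w
    rw [hDD] at this
    simpa only [dotProduct, sq] using this
  have hmain : ∀ K : Matrix (Fin m) (Fin p) ℝ,
      (α / 2) * ∑ i, ∑ j, (K i j) ^ 2 ≤ ∫ ω, ∑ j, ((D *ᵥ (K *ᵥ y ω)) j) ^ 2 ∂μ := by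
    intro K
    have hI1 : Integrable (fun ω => ∑ i, ((K *ᵥ y ω) i) ^ 2) μ :=
      integrable_finsetSum _ fun j _ => (hKy2 K j).integrable_sq
    calc (α / 2) * ∑ i, ∑ j, (K i j) ^ 2
        = sigmaMin (Dᵀ * D) *
          ∑ i, (sigmaMin (C * Vxx * Cᵀ) + sigmaMin Vvv) * (K i ⬝ᵥ K i) := by
          rw [hα, ← Finset.mul_sum]
          simp only [dotProduct, sq]
          ring
      _ ≤ sigmaMin (Dᵀ * D) * ∑ i, ∫ ω, ((K *ᵥ y ω) i) ^ 2 ∂μ :=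
          mul_le_mul_of_nonneg_left (Finset.sum_le_sum fun i _ => hrow (K i))
            (aux_sigma_nonneg _)
      _ = ∫ ω, sigmaMin (Dᵀ * D) * ∑ i, ((K *ᵥ y ω) i) ^ 2 ∂μ := by
          rw [integral_const_mul, integral_finsetSum _ fun j _ => (hKy2 K j).integrable_sq]
      _ ≤ _ := integral_mono (hI1.const_mul _)
          (integrable_finsetSum _ fun j _ => (hDKy2 K j).integrable_sq) fun ω => hD _
  have hfrob : ∀ K : Matrix (Fin m) (Fin p) ℝ, frobNorm K ^ 2 = ∑ i, ∑ j, (K i j) ^ 2 := by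
    intro K
    exact Real.sq_sqrt (by positivity)
  refine ⟨convex_univ, ?_⟩
  intro K₁ _ K₂ _ a b ha hb hab
  have hb' : b = 1 - a := by linarith
  have key := hmain (K₁ - K₂)
  have hpt : ∀ ω, ∑ j, ((H *ᵥ x ω + D *ᵥ ((a • K₁ + b • K₂) *ᵥ y ω)) j) ^ 2 =
      a * ∑ j, ((H *ᵥ x ω + D *ᵥ (K₁ *ᵥ y ω)) j) ^ 2 +
      b * ∑ j, ((H *ᵥ x ω + D *ᵥ (K₂ *ᵥ y ω)) j) ^ 2 -
      a * b * ∑ j, ((D *ᵥ ((K₁ - K₂) *ᵥ y ω)) j) ^ 2 := by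
    intro ω
    rw [Finset.mul_sum, Finset.mul_sum, Finset.mul_sum, ← Finset.sum_add_distrib,
      ← Finset.sum_sub_distrib]
    refine Finset.sum_congr rfl fun j _ => ?_
    simp only [add_mulVec, sub_mulVec, smul_mulVec, mulVec_add, mulVec_sub, mulVec_smul,
      Pi.add_apply, Pi.sub_apply, Pi.smul_apply, smul_eq_mul]
    subst hb'
    ring
  have hint : ∫ ω, ∑ j, ((H *ᵥ x ω + D *ᵥ ((a • K₁ + b • K₂) *ᵥ y ω)) j) ^ 2 ∂μ =
      a * ∫ ω, ∑ j, ((H *ᵥ x ω + D *ᵥ (K₁ *ᵥ y ω)) j) ^ 2 ∂μ +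
      b * ∫ ω, ∑ j, ((H *ᵥ x ω + D *ᵥ (K₂ *ᵥ y ω)) j) ^ 2 ∂μ -
      a * b * ∫ ω, ∑ j, ((D *ᵥ ((K₁ - K₂) *ᵥ y ω)) j) ^ 2 ∂μ := by
    have hs : Integrable (fun ω => a * ∑ j, ((H *ᵥ x ω + D *ᵥ (K₁ *ᵥ y ω)) j) ^ 2 +
        b * ∑ j, ((H *ᵥ x ω + D *ᵥ (K₂ *ᵥ y ω)) j) ^ 2) μ :=
      ((hzI K₁).const_mul a).add ((hzI K₂).const_mul b)
    simp only [hpt]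
    rw [integral_sub hs
      ((integrable_finsetSum _ fun j _ => (hDKy2 (K₁ - K₂) j).integrable_sq).const_mul _),
      integral_add ((hzI K₁).const_mul a) ((hzI K₂).const_mul b),
      integral_const_mul, integral_const_mul, integral_const_mul]
  have hfr : ∑ i, ∑ j, ((a • K₁ + b • K₂) i j) ^ 2 = a * ∑ i, ∑ j, (K₁ i j) ^ 2 +
      b * ∑ i, ∑ j, (K₂ i j) ^ 2 - a * b * ∑ i, ∑ j, ((K₁ - K₂) i j) ^ 2 := by
    simp only [Finset.mul_sum, ← Finset.sum_add_distrib, ← Finset.sum_sub_distrib]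
    refine Finset.sum_congr rfl fun i _ => Finset.sum_congr rfl fun j _ => ?_
    simp only [Matrix.add_apply, Matrix.sub_apply, Matrix.smul_apply, smul_eq_mul]
    subst hb'
    ring
  have key2 := mul_le_mul_of_nonneg_left key (mul_nonneg ha hb)
  simp only [hfrob, smul_eq_mul]
  change (∫ ω, ∑ j, ((H *ᵥ x ω + D *ᵥ ((a • K₁ + b • K₂) *ᵥ y ω)) j) ^ 2 ∂μ) - _ ≤
    a * ((∫ ω, ∑ j, ((H *ᵥ x ω + D *ᵥ (K₁ *ᵥ y ω)) j) ^ 2 ∂μ) - _) +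
    b * ((∫ ω, ∑ j, ((H *ᵥ x ω + D *ᵥ (K₂ *ᵥ y ω)) j) ^ 2 ∂μ) - _)
  rw [hint, hfr]
  linarith
end

section
/- If ‖K‖₂ ≤ b_K, then the fourth moment of the loss satisfies E[(zᵀ z)²] ≤ (‖H‖₂ + ‖D‖₂ ‖C‖₂ b_K + ‖D‖₂ b_K)⁴ (κ_x + 2 Tr V_xx Tr V_vv + κ_v). -/
open MeasureTheory ProbabilityTheory Matrix

lemma opNorm_nonneg' {α β : Type*} [Fintype α] [Fintype β] [DecidableEq β]
    (A : Matrix α β ℝ) : 0 ≤ opNorm A := norm_nonneg _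

lemma norm_mulVec_le {α β : Type*} [Fintype α] [Fintype β] [DecidableEq β]
    (A : Matrix α β ℝ) (w : β → ℝ) :
    ‖WithLp.toLp 2 (A.mulVec w)‖ ≤ opNorm A * ‖WithLp.toLp 2 w‖ := by
  have h := (LinearMap.toContinuousLinearMap (Matrix.toEuclideanLin A)).le_opNorm
    (WithLp.toLp 2 w)
  simpa [opNorm, Matrix.toLpLin_apply] using h

lemma sum_sq_eq_norm {α : Type*} [Fintype α] (w : α → ℝ) :
    ∑ i, (w i) ^ 2 = ‖WithLp.toLp 2 w‖ ^ 2 := by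
  simp [EuclideanSpace.norm_sq_eq]

lemma key_bound {l n m p : ℕ} (H : Matrix (Fin l) (Fin n) ℝ) (D : Matrix (Fin l) (Fin m) ℝ)
    (C : Matrix (Fin p) (Fin n) ℝ) (bK : ℝ) (hbK : 0 < bK)
    (K : Matrix (Fin m) (Fin p) ℝ) (hK : opNorm K ≤ bK) (x : Fin n → ℝ) (v : Fin p → ℝ) :
    (∑ j, ((H.mulVec x + D.mulVec (K.mulVec (C.mulVec x + v))) j) ^ 2) ^ 2
      ≤ (opNorm H + opNorm D * opNorm C * bK + opNorm D * bK) ^ 4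
        * ((∑ i, (x i) ^ 2) ^ 2 + 2 * ((∑ i, (x i) ^ 2) * (∑ i, (v i) ^ 2))
          + (∑ i, (v i) ^ 2) ^ 2) := by
  rw [sum_sq_eq_norm, sum_sq_eq_norm x, sum_sq_eq_norm v]
  have hH := opNorm_nonneg' H
  have hD := opNorm_nonneg' D
  have hC := opNorm_nonneg' C
  set X := ‖WithLp.toLp 2 x‖ with hX
  set V := ‖WithLp.toLp 2 v‖ with hV
  have hX0 : 0 ≤ X := norm_nonneg _
  have hV0 : 0 ≤ V := norm_nonneg _
  have h1 : ‖WithLp.toLp 2 (C.mulVec x + v)‖ ≤ opNorm C * X + V := by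
    rw [WithLp.toLp_add]
    exact (norm_add_le _ _).trans (by gcongr; exact norm_mulVec_le C x)
  have h2 : ‖WithLp.toLp 2 (K.mulVec (C.mulVec x + v))‖ ≤ bK * (opNorm C * X + V) :=
    (norm_mulVec_le K _).trans (mul_le_mul hK h1 (norm_nonneg _) hbK.le)
  have h3 : ‖WithLp.toLp 2 (H.mulVec x + D.mulVec (K.mulVec (C.mulVec x + v)))‖
      ≤ opNorm H * X + opNorm D * (bK * (opNorm C * X + V)) := by
    rw [WithLp.toLp_add]
    refine (norm_add_le _ _).trans (add_le_add (norm_mulVec_le H x) ?_)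
    exact (norm_mulVec_le D _).trans (by gcongr)
  obtain ⟨a, ha⟩ : ∃ a, a = opNorm H + opNorm D * opNorm C * bK := ⟨_, rfl⟩
  obtain ⟨b, hb⟩ : ∃ b, b = opNorm D * bK := ⟨_, rfl⟩
  have ha0 : 0 ≤ a := by rw [ha]; positivity
  have hb0 : 0 ≤ b := by rw [hb]; positivity
  rw [← ha, ← hb]
  have h4 : opNorm H * X + opNorm D * (bK * (opNorm C * X + V)) = a * X + b * V := by
    rw [ha, hb]; ring
  rw [h4] at h3
  have h5 : (a * X + b * V) ^ 2 ≤ (a + b) ^ 2 * (X ^ 2 + V ^ 2) := by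
    nlinarith [sq_nonneg (a * V - b * X), mul_nonneg (mul_nonneg ha0 hb0) (sq_nonneg X),
      mul_nonneg (mul_nonneg ha0 hb0) (sq_nonneg V)]
  calc _ ≤ ((a * X + b * V) ^ 2) ^ 2 := by gcongr
    _ ≤ ((a + b) ^ 2 * (X ^ 2 + V ^ 2)) ^ 2 := by gcongr
    _ = _ := by ring

/-- If `‖K‖₂ ≤ b_K`, then
`E[(zᵀz)²] ≤ (‖H‖₂ + ‖D‖₂‖C‖₂ b_K + ‖D‖₂ b_K)⁴ (κ_x + 2 Tr V_xx Tr V_vv + κ_v)`. -/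
theorem stmt_4
    {Ω : Type*} [MeasurableSpace Ω] (μ : Measure Ω) [IsProbabilityMeasure μ]
    (n p l m : ℕ) (hn : 0 < n) (hp : 0 < p) (hl : 0 < l) (hm : 0 < m)
    (H : Matrix (Fin l) (Fin n) ℝ) (D : Matrix (Fin l) (Fin m) ℝ)
    (C : Matrix (Fin p) (Fin n) ℝ) (bK : ℝ) (hbK : 0 < bK)
    (x : Ω → Fin n → ℝ) (v : Ω → Fin p → ℝ)
    (hxmeas : Measurable x) (hvmeas : Measurable v)
    (hindep : IndepFun x v μ)
    (hxmean : ∀ i, ∫ ω, x ω i ∂μ = 0) (hvmean : ∀ i, ∫ ω, v ω i ∂μ = 0)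
    (Vxx : Matrix (Fin n) (Fin n) ℝ) (Vvv : Matrix (Fin p) (Fin p) ℝ)
    (hVxxInt : ∀ i j, Integrable (fun ω => x ω i * x ω j) μ)
    (hVxx : ∀ i j, ∫ ω, x ω i * x ω j ∂μ = Vxx i j)
    (hVvvInt : ∀ i j, Integrable (fun ω => v ω i * v ω j) μ)
    (hVvv : ∀ i j, ∫ ω, v ω i * v ω j ∂μ = Vvv i j)
    (κx κv : ℝ)
    (hx4Int : Integrable (fun ω => (∑ i, (x ω i) ^ 2) ^ 2) μ)
    (hx4 : ∫ ω, (∑ i, (x ω i) ^ 2) ^ 2 ∂μ ≤ κx)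
    (hv4Int : Integrable (fun ω => (∑ i, (v ω i) ^ 2) ^ 2) μ)
    (hv4 : ∫ ω, (∑ i, (v ω i) ^ 2) ^ 2 ∂μ ≤ κv)
    (K : Matrix (Fin m) (Fin p) ℝ) (hK : opNorm K ≤ bK) :
    (∫ ω, (∑ j, ((H.mulVec (x ω) + D.mulVec (K.mulVec (C.mulVec (x ω) + v ω))) j) ^ 2) ^ 2 ∂μ)
      ≤ (opNorm H + opNorm D * opNorm C * bK + opNorm D * bK) ^ 4
        * (κx + 2 * Vxx.trace * Vvv.trace + κv) := by
  have hSx : Measurable (fun w : Fin n → ℝ => ∑ i, (w i) ^ 2) := by fun_prop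
  have hSv : Measurable (fun w : Fin p → ℝ => ∑ i, (w i) ^ 2) := by fun_prop
  have hind : IndepFun (fun ω => ∑ i, (x ω i) ^ 2) (fun ω => ∑ i, (v ω i) ^ 2) μ :=
    hindep.comp hSx hSv
  have hxI : Integrable (fun ω => ∑ i, (x ω i) ^ 2) μ :=
    integrable_finset_sum _ fun i _ => by simpa [pow_two] using hVxxInt i i
  have hvI : Integrable (fun ω => ∑ i, (v ω i) ^ 2) μ :=
    integrable_finset_sum _ fun i _ => by simpa [pow_two] using hVvvInt i i
  have hxT : ∫ ω, ∑ i, (x ω i) ^ 2 ∂μ = Vxx.trace := by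
    rw [integral_finset_sum _ fun i _ => by simpa [pow_two] using hVxxInt i i]
    simp [Matrix.trace, pow_two, hVxx]
  have hvT : ∫ ω, ∑ i, (v ω i) ^ 2 ∂μ = Vvv.trace := by
    rw [integral_finset_sum _ fun i _ => by simpa [pow_two] using hVvvInt i i]
    simp [Matrix.trace, pow_two, hVvv]
  have hxvI : Integrable (fun ω => (∑ i, (x ω i) ^ 2) * (∑ i, (v ω i) ^ 2)) μ :=
    hind.integrable_mul hxI hvI
  have hxvT : ∫ ω, (∑ i, (x ω i) ^ 2) * (∑ i, (v ω i) ^ 2) ∂μ = Vxx.trace * Vvv.trace := by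
    rw [← hxT, ← hvT]
    exact hind.integral_fun_mul_eq_mul_integral hxI.aestronglyMeasurable hvI.aestronglyMeasurable
  have hI1 := hx4Int.add (hxvI.const_mul 2)
  have hI := hI1.add hv4Int
  refine (integral_mono_of_nonneg (Filter.Eventually.of_forall fun ω => by positivity)
    (hI.const_mul ((opNorm H + opNorm D * opNorm C * bK + opNorm D * bK) ^ 4))
    (Filter.Eventually.of_forall fun ω =>
      key_bound H D C bK hbK K hK (x ω) (v ω))).trans ?_
  rw [integral_const_mul, integral_add' hI1 hv4Int, integral_add' hx4Int (hxvI.const_mul 2),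
    integral_const_mul, hxvT]
  have : 0 ≤ (opNorm H + opNorm D * opNorm C * bK + opNorm D * bK) ^ 4 := by positivity
  exact mul_le_mul_of_nonneg_left (by linarith) this
end
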